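/- Let f ∈ ℚ_2[x] be a nonzero polynomial with σ_{ℚ_2}(f) ≤ 2. Then f has at most 35 distinct roots in ℚ_2. -/

import Mathlib

open Polynomial

/-- `f` admits a presentation of additive complexity `s` over `L`. -/
def HasAddComplexityPres {L : Type*} [Field L] (f : L[X]) (s : ℕ) : Prop :=
  ∃ (c d : ℕ → L) (m m' : ℕ → ℕ → ℕ) (Xs : ℕ → L[X]),
    Xs 0 = X ∧
    (∀ j, 1 ≤ j → j ≤ s →
      Xs j = C (c j) * ∏ i ∈ Finset.range j, Xs i ^ m i j
           + C (d j) * ∏ i ∈ Finset.range j, Xs i ^ m' i j) ∧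
    f = C (c (s+1)) * ∏ i ∈ Finset.range (s+1), Xs i ^ m i (s+1)

/-- The additive complexity `σ_L(f)`: the least `s` admitting such a presentation. -/
noncomputable def addComplexity {L : Type*} [Field L] (f : L[X]) : ℕ :=
  sInf {s | HasAddComplexityPres f s}


lemma seq_lem (A : ℕ → ℚ_[2]) (K : ℕ) (ε : ℝ) (hε : 0 ≤ ε) (x y : ℚ_[2]) (hx : x ≠ 0) (hy : y ≠ 0)
    (hxy : x ≠ y) (hx1 : ‖x‖ ≤ 1) (hy1 : ‖y‖ ≤ 1) (A0 : A 0 = 0)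
    (hA : ∀ k, 3 ≤ k → ‖A k‖ ≤ ε)
    (ex : ∑ k ∈ Finset.range (K+3), A k * x ^ k = 0)
    (ey : ∑ k ∈ Finset.range (K+3), A k * y ^ k = 0) :
    ‖A 2‖ ≤ ε ∧ ‖A 1‖ ≤ ε := by
  have red : ∀ z : ℚ_[2], z ≠ 0 → ∑ k ∈ Finset.range (K+3), A k * z ^ k = 0 →
      A 1 + A 2 * z + ∑ k ∈ Finset.range K, A (k+3) * z ^ (k+2) = 0 := by
    intro z hz h
    rw [Finset.sum_range_succ', Finset.sum_range_succ', Finset.sum_range_succ'] at h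
    have : z * (A 1 + A 2 * z + ∑ k ∈ Finset.range K, A (k+3) * z ^ (k+2)) = 0 := by
      rw [← h, mul_add, Finset.mul_sum, A0]
      have : ∑ i ∈ Finset.range K, z * (A (i + 3) * z ^ (i + 2)) =
        ∑ k ∈ Finset.range K, A (k + 1 + 1 + 1) * z ^ (k + 1 + 1 + 1) := by
        refine Finset.sum_congr rfl fun i _ => ?_
        ring
      rw [this]; ring
    exact (mul_eq_zero.mp this).resolve_left hz
  have rx := red x hx ex
  have ry := red y hy ey
  have hpow : ∀ k, ‖x ^ k - y ^ k‖ ≤ ‖x - y‖ := by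
    intro k
    rw [← geom_sum₂_mul, norm_mul]
    have : ‖∑ i ∈ Finset.range k, x ^ i * y ^ (k - 1 - i)‖ ≤ 1 := by
      refine IsUltrametricDist.norm_sum_le_of_forall_le_of_nonneg zero_le_one fun i _ => ?_
      rw [norm_mul, norm_pow, norm_pow]
      exact mul_le_one₀ (pow_le_one₀ (norm_nonneg _) hx1) (by positivity) (pow_le_one₀ (norm_nonneg _) hy1)
    nlinarith [norm_nonneg (x - y)]
  have h2 : ‖A 2‖ ≤ ε := by
    have e : A 2 * (x - y) = - ∑ k ∈ Finset.range K, A (k+3) * (x ^ (k+2) - y ^ (k+2)) := by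
      simp only [mul_sub, Finset.sum_sub_distrib]
      linear_combination rx - ry
    have : ‖A 2 * (x - y)‖ ≤ ε * ‖x - y‖ := by
      rw [e, norm_neg]
      refine IsUltrametricDist.norm_sum_le_of_forall_le_of_nonneg (by positivity) fun i _ => ?_
      rw [norm_mul]
      exact mul_le_mul (hA _ (by omega)) (hpow _) (norm_nonneg _) hε
    rw [norm_mul] at this
    exact le_of_mul_le_mul_right this (norm_pos_iff.mpr (sub_ne_zero.mpr hxy))
  refine ⟨h2, ?_⟩
  have e : A 1 = -(A 2 * x + ∑ k ∈ Finset.range K, A (k+3) * x ^ (k+2)) := by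
    linear_combination rx
  rw [e, norm_neg]
  refine (IsUltrametricDist.norm_add_le_max _ _).trans (max_le ?_ ?_)
  · rw [norm_mul]; nlinarith [norm_nonneg (A 2), norm_nonneg x]
  · refine IsUltrametricDist.norm_sum_le_of_forall_le_of_nonneg (by positivity) fun i _ => ?_
    rw [norm_mul, norm_pow]
    have := pow_le_one₀ (n := i+2) (norm_nonneg x) hx1
    have h3 := hA (i+3) (by omega)
    nlinarith [norm_nonneg (A (i+3)), pow_nonneg (norm_nonneg x) (i+2)]

lemma natnorm (k : ℕ) : ‖(k : ℚ_[2])‖ ≤ 1 := by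
  simpa using Padic.norm_int_le_one (p := 2) (k : ℤ)

lemma mulnat (k : ℕ) (z : ℚ_[2]) (M : ℝ) (h : ‖z‖ ≤ M) : ‖(k : ℚ_[2]) * z‖ ≤ M := by
  rw [norm_mul]; nlinarith [natnorm k, norm_nonneg z, norm_nonneg (k : ℚ_[2])]

lemma subM {x y : ℚ_[2]} {M : ℝ} (hx : ‖x‖ ≤ M) (hy : ‖y‖ ≤ M) : ‖x - y‖ ≤ M :=
  by rw [sub_eq_add_neg]; exact (IsUltrametricDist.norm_add_le_max _ _).trans (max_le hx (by rwa [norm_neg]))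
lemma addM {x y : ℚ_[2]} {M : ℝ} (hx : ‖x‖ ≤ M) (hy : ‖y‖ ≤ M) : ‖x + y‖ ≤ M :=
  (IsUltrametricDist.norm_add_le_max _ _).trans (max_le hx hy)

noncomputable def dsc (l : ℕ) : ℕ → ℚ_[2]
  | 0 => 1
  | k+1 => dsc l k * ((l : ℚ_[2]) - k)

lemma dsc_eq (l k : ℕ) : dsc l k = (k.factorial : ℚ_[2]) * (l.choose k : ℚ_[2]) := by
  rw [← Nat.cast_mul, ← Nat.descFactorial_eq_factorial_mul_choose]
  induction k with
  | zero => simp [dsc]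
  | succ k ih =>
    rw [dsc, ih, Nat.descFactorial_succ]
    rcases le_or_gt k l with h | h
    · push_cast [h]; ring
    · rw [Nat.descFactorial_eq_zero_iff_lt.mpr h]; simp

lemma dsc_bound (a b c : ℚ_[2]) (l m n : ℕ) (M : ℝ) 
    (h0 : ‖a + b + c‖ ≤ M) (h1 : ‖a * l + b * m + c * n‖ ≤ M)
    (h2 : ‖a * l^2 + b * m^2 + c * n^2‖ ≤ M) (k : ℕ) :
    ‖a * dsc l k + b * dsc m k + c * dsc n k‖ ≤ M ∧
    ‖a * dsc l k * l + b * dsc m k * m + c * dsc n k * n‖ ≤ M ∧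
    ‖a * dsc l k * l^2 + b * dsc m k * m^2 + c * dsc n k * n^2‖ ≤ M := by
  induction k with
  | zero => simpa [dsc] using ⟨h0, h1, h2⟩
  | succ k ih =>
    obtain ⟨i0, i1, i2⟩ := ih
    refine ⟨?_, ?_, ?_⟩
    · convert subM i1 (mulnat k _ _ i0) using 2
      simp only [dsc]; ring
    · convert subM i2 (mulnat k _ _ i1) using 2
      simp only [dsc]; ring
    · convert subM (addM (subM (mulnat (l+m+n) _ _ i2) (mulnat (l*m+m*n+l*n) _ _ i1)) (mulnat (l*m*n) _ _ i0)) (mulnat k _ _ i2) using 2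
      simp only [dsc]; push_cast; ring

lemma fact_norm (k : ℕ) (hk : 1 ≤ k) : (2:ℝ)⁻¹ ^ (k-1) ≤ ‖(k.factorial : ℚ_[2])‖ := by
  have h := Nat.emultiplicity_two_factorial_lt (n := k) (by omega)
  have hne : (k.factorial : ℚ_[2]) ≠ 0 := by exact_mod_cast k.factorial_ne_zero
  have hv : padicValNat 2 k.factorial < k := by
    rw [← padicValNat_eq_emultiplicity k.factorial_ne_zero] at h
    exact_mod_cast h
  rw [Padic.norm_eq_zpow_neg_valuation hne, Padic.valuation_natCast, zpow_neg, zpow_natCast, ← inv_pow]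
  exact pow_le_pow_of_le_one (by norm_num) (by norm_num) (by omega)

lemma norm2 : ‖(2:ℚ_[2])‖ = 1/2 := by
  have := Padic.norm_p (p := 2)
  norm_num at this ⊢; exact this
lemma norm4 : ‖(4:ℚ_[2])‖ = 1/4 := by
  rw [show (4:ℚ_[2]) = 2*2 by norm_num, norm_mul, norm2]; norm_num

lemma core (a b c : ℚ_[2]) (ha : a ≠ 0) (l m n : ℕ) (hlm : l ≠ m) (hln : l ≠ n)
    (x y : ℚ_[2]) (hx : x ≠ 0) (hy : y ≠ 0)
    (hxy : x ≠ y) (hx1 : ‖x‖ ≤ 1) (hy1 : ‖y‖ ≤ 1) (e0 : a + b + c = 0)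
    (ex : a * (1+4*x)^l + b * (1+4*x)^m + c*(1+4*x)^n = 0)
    (ey : a * (1+4*y)^l + b * (1+4*y)^m + c*(1+4*y)^n = 0) : False := by
  set A : ℕ → ℚ_[2] := fun k => 4^k * (a * l.choose k + b * m.choose k + c * n.choose k) with hAdef
  have expand1 : ∀ (z : ℚ_[2]) (j K : ℕ), j < K → (1+4*z)^j = ∑ k ∈ Finset.range K, (j.choose k : ℚ_[2]) * (4^k * z^k) := by
    intro z j K hj
    rw [add_comm, add_pow]
    rw [← Finset.sum_subset (Finset.range_subset_range.mpr (show j+1 ≤ K by omega))]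
    · refine Finset.sum_congr rfl fun i _ => ?_
      rw [mul_pow]; simp; ring
    · intro i _ hi
      rw [Nat.choose_eq_zero_of_lt (by simpa using hi)]; simp
  have expand : ∀ z : ℚ_[2], ∑ k ∈ Finset.range (l+m+n+3), A k * z ^ k = a * (1+4*z)^l + b * (1+4*z)^m + c*(1+4*z)^n := by
    intro z
    rw [expand1 z l (l+m+n+3) (by omega), expand1 z m (l+m+n+3) (by omega), expand1 z n (l+m+n+3) (by omega), Finset.mul_sum,
      Finset.mul_sum, Finset.mul_sum, ← Finset.sum_add_distrib, ← Finset.sum_add_distrib]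
    refine Finset.sum_congr rfl fun i _ => ?_
    simp only [hAdef]; ring
  set v1 := a * l + b * m + c * n with hv1
  set v2 := a * l^2 + b * m^2 + c * n^2 with hv2
  set M := max ‖v1‖ ‖v2‖ with hM
  have hM0 : 0 ≤ M := (norm_nonneg _).trans (le_max_left _ _)
  have bd := dsc_bound a b c l m n M (by rw [e0]; simpa using hM0) (le_max_left _ _) (le_max_right _ _)
  have hA : ∀ k, (k.factorial : ℚ_[2]) * A k = 4^k * (a * dsc l k + b * dsc m k + c * dsc n k) := by
    intro k; simp only [hAdef, dsc_eq]; ring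
  have key := seq_lem A (l+m+n) (M/16) (by positivity) x y hx hy hxy hx1 hy1 (by simp [hAdef, e0]) ?_
    ((expand x).trans ex) ((expand y).trans ey)
  · obtain ⟨k2, k1⟩ := key
    have a1 : A 1 = 4 * v1 := by simp [hAdef, hv1]
    have a2 : 2 * A 2 = 4 * (4 * (v2 - v1)) := by
      have := hA 2
      simp only [dsc, Nat.factorial] at this
      push_cast at this
      rw [hv2, hv1]; linear_combination this
    have n1 : ‖v1‖ ≤ M / 4 := by
      rw [a1, norm_mul, norm4] at k1; linarith
    have n2 : ‖v2 - v1‖ ≤ M / 2 := by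
      have := congrArg norm a2
      simp only [norm_mul, norm4, norm2] at this; linarith
    have n3 : ‖v2‖ ≤ M / 2 := by
      have := addM n2 (n1.trans (show M/4 ≤ M/2 by linarith))
      simpa using this
    have : M ≤ M / 2 := max_le (by linarith) n3
    have M0 : M = 0 := by linarith
    have z1 : v1 = 0 := by
      rw [← norm_le_zero_iff, ← M0]; exact le_max_left _ _
    have z2 : v2 = 0 := by
      rw [← norm_le_zero_iff, ← M0]; exact le_max_right _ _
    have : a * (((l:ℚ_[2]) - m) * (l - n)) = 0 := by
      have : a * (((l:ℚ_[2]) - m) * (l - n)) = v2 - (m+n) * v1 + m * n * (a + b + c) := by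
        rw [hv1, hv2]; ring
      rw [this, z1, z2, e0]; ring
    have h1 : (l:ℚ_[2]) - m ≠ 0 := sub_ne_zero.mpr (by exact_mod_cast hlm)
    have h2 : (l:ℚ_[2]) - n ≠ 0 := sub_ne_zero.mpr (by exact_mod_cast hln)
    exact mul_ne_zero ha (mul_ne_zero h1 h2) this
  · intro k hk
    have h := congrArg norm (hA k)
    rw [norm_mul _ (A k), norm_mul (4^k) (a * dsc l k + b * dsc m k + c * dsc n k), norm_pow, norm4] at h
    have f := fact_norm k (by omega)
    have b1 := (bd k).1
    have : (2:ℝ)⁻¹^(k-1) * ‖A k‖ ≤ (1/4)^k * M := by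
      calc _ ≤ ‖(k.factorial : ℚ_[2])‖ * ‖A k‖ := by gcongr
        _ = _ := h
        _ ≤ _ := by gcongr
    obtain ⟨j, rfl⟩ := Nat.exists_eq_add_of_le hk
    have e1 : (1/4:ℝ)^(3+j) = (2:ℝ)⁻¹^(3+j-1) * ((1/16) * (2:ℝ)⁻¹^j) := by
      rw [show (1/4:ℝ) = (2:ℝ)⁻¹ * (2:ℝ)⁻¹ by norm_num, mul_pow, show 3 + j - 1 = j+2 by omega]; ring
    rw [e1, mul_assoc] at this
    have := le_of_mul_le_mul_left this (by positivity)
    have : (2:ℝ)⁻¹^j ≤ 1 := pow_le_one₀ (by norm_num) (by norm_num)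
    nlinarith

lemma dvd_two (w : ℚ_[2]) (hw : ‖w‖ ≤ 1) : ∃ z : ℚ_[2], ‖z‖ ≤ 1 ∧ (w = 2 * z ∨ w = 1 + 2 * z) := by
  obtain ⟨n, hn, h⟩ := PadicInt.exists_mem_range (p := 2) (⟨w, hw⟩ : ℤ_[2])
  rw [PadicInt.maximalIdeal_eq_span_p, Ideal.mem_span_singleton] at h
  obtain ⟨z, hz⟩ := h
  have hz' : w - (n : ℚ_[2]) = 2 * (z : ℚ_[2]) := by
    have := congrArg (fun t : ℤ_[2] => (t : ℚ_[2])) hz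
    simp only [PadicInt.coe_sub, PadicInt.coe_mul, PadicInt.coe_natCast] at this
    exact_mod_cast this
  refine ⟨z, z.2, ?_⟩
  interval_cases n
  · left; simpa using hz'
  · right; simp at hz'; linear_combination hz'

lemma unit_split (u : ℚ_[2]) (hu : ‖u‖ = 1) : ∃ z : ℚ_[2], ‖z‖ ≤ 1 ∧ (u = 1 + 4 * z ∨ u = -(1 + 4 * z)) := by
  obtain ⟨w, hw, h⟩ := dvd_two u hu.le
  rcases h with h | h
  · rw [h, norm_mul, norm2] at hu; linarith
  · obtain ⟨z, hz, h'⟩ := dvd_two w hw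
    rcases h' with h' | h'
    · exact ⟨z, hz, Or.inl (by rw [h, h']; ring)⟩
    · refine ⟨-1 - z, subM (by simp) hz, Or.inr (by rw [h, h']; ring)⟩

lemma norm_one_add (z : ℚ_[2]) (hz : ‖z‖ ≤ 1) : ‖1 + 4 * z‖ ≤ 1 := by
  refine addM (by simp) ?_
  rw [norm_mul, norm4]; linarith

lemma pow_form (z : ℚ_[2]) (hz : ‖z‖ ≤ 1) (k : ℕ) : ∃ y : ℚ_[2], ‖y‖ ≤ 1 ∧ (1 + 4 * z)^k = 1 + 4 * y := by
  induction k with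
  | zero => exact ⟨0, by simp, by simp⟩
  | succ k ih =>
    obtain ⟨y, hy, h⟩ := ih
    refine ⟨y * (1+4*z) + z, addM ?_ hz, by rw [pow_succ, h]; ring⟩
    rw [norm_mul]
    exact mul_le_one₀ hy (norm_nonneg _) (norm_one_add z hz)

lemma tors (g : ℕ) : g ≠ 0 → ∀ z : ℚ_[2], ‖z‖ ≤ 1 → (1 + 4 * z)^g = 1 → z = 0 := by
  induction g using Nat.strong_induction_on with
  | _ g ih =>
    intro hg z hz h
    rcases Nat.even_or_odd' g with ⟨k, rfl | rfl⟩
    · have h2 : ((1+4*z)^k)^2 = 1 := by rw [← pow_mul, mul_comm k 2]; exact h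
      rcases (eq_or_eq_neg_of_sq_eq_sq _ 1 (h2.trans (one_pow 2).symm)) with h3 | h3
      · exact ih k (by omega) (by omega) z hz h3
      · obtain ⟨y, hy, h4⟩ := pow_form z hz k
        rw [h3] at h4
        have : (2:ℚ_[2]) = 4 * (-y) := by linear_combination -h4
        have := congrArg norm this
        rw [norm_mul, norm4, norm2, norm_neg] at this
        linarith
    · have hs : ∀ j : ℕ, ∃ y : ℚ_[2], ‖y‖ ≤ 1 ∧ ∑ i ∈ Finset.range j, (1+4*z)^i = j + 4 * y := by
        intro j
        induction j with
        | zero => exact ⟨0, by simp, by simp⟩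
        | succ j ihj =>
          obtain ⟨y, hy, e⟩ := ihj
          obtain ⟨y', hy', e'⟩ := pow_form z hz j
          exact ⟨y + y', addM hy hy', by rw [Finset.sum_range_succ, e, e']; push_cast; ring⟩
      have hm := geom_sum_mul (1+4*z) (2*k+1)
      rw [h, sub_self] at hm
      rcases mul_eq_zero.mp hm with h5 | h5
      · obtain ⟨y, hy, e⟩ := hs (2*k+1)
        rw [h5] at e
        push_cast at e
        have : (1:ℚ_[2]) = 2 * (-(2*y) - k) := by linear_combination -e
        have hn : ‖-(2*y) - (k:ℚ_[2])‖ ≤ 1 := by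
          refine subM ?_ (natnorm k)
          rw [norm_neg, norm_mul, norm2]; linarith
        have := congrArg norm this
        rw [norm_mul, norm2, norm_one] at this
        linarith
      · have : 4 * z = 0 := by linear_combination h5
        simpa using this

lemma tors' (g : ℤ) (hg : g ≠ 0) (w : ℚ_[2]) (h : w ^ g = 1) : w = 1 ∨ w = -1 := by
  have hN : w ^ g.natAbs = 1 := by
    rcases Int.natAbs_eq g with e | e
    · rw [e, zpow_natCast] at h; exact h
    · rw [e, zpow_neg, zpow_natCast, inv_eq_one] at h; exact h
  have h0 : g.natAbs ≠ 0 := by simpa using hg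
  have hu : ‖w‖ = 1 := by
    have := congrArg norm hN
    rw [norm_pow, norm_one] at this
    exact (pow_eq_one_iff_of_nonneg (norm_nonneg _) h0).mp this
  have h2 : (w^2)^g.natAbs = 1 := by rw [← pow_mul, mul_comm, pow_mul, hN, one_pow]
  obtain ⟨z, hz, e⟩ := unit_split w hu
  have : ∃ y : ℚ_[2], ‖y‖ ≤ 1 ∧ w^2 = 1 + 4 * y := by
    obtain ⟨y, hy, e'⟩ := pow_form z hz 2
    exact ⟨y, hy, by rw [← e']; rcases e with e | e <;> rw [e]; ring⟩
  obtain ⟨y, hy, e'⟩ := this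
  rw [e'] at h2
  rw [tors _ h0 y hy h2] at e'
  simp at e'
  exact e'

lemma encard_le_two_of {α : Type*} (S : Set α)
    (h : ∀ x ∈ S, ∀ y ∈ S, ∀ z ∈ S, x ≠ y → x ≠ z → y ≠ z → False) : S.encard ≤ 2 := by
  by_contra hc
  push Not at hc
  have h3 : (3 : ℕ∞) ≤ S.encard := by
    have := Order.add_one_le_of_lt hc
    norm_num at this; exact this
  obtain ⟨t, ht, ht3⟩ := Set.exists_subset_encard_eq h3
  obtain ⟨x, y, z, hxy, hxz, hyz, rfl⟩ := Set.encard_eq_three.mp ht3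
  exact h x (ht (by simp)) y (ht (by simp)) z (ht (by simp)) hxy hxz hyz

lemma zpow_pair (g : ℤ) (hg : g ≠ 0) (γ : ℚ_[2]) :
    ∃ z1 z2 : ℚ_[2], ∀ z : ℚ_[2], z ≠ 0 → z ^ g = γ → z = z1 ∨ z = z2 := by
  by_cases hex : ∃ x : ℚ_[2], x ≠ 0 ∧ x ^ g = γ
  · obtain ⟨x, hx, ex⟩ := hex
    have hγ : γ ≠ 0 := by rw [← ex]; exact zpow_ne_zero _ hx
    refine ⟨x, -x, fun u _ hu => ?_⟩
    have := tors' g hg (u / x) (by rw [div_zpow, hu, ex, div_self hγ])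
    rcases this with h | h
    · left; rw [div_eq_iff hx] at h; simpa using h
    · right; rw [div_eq_iff hx] at h; simpa using h
  · exact ⟨0, 0, fun z h0 h => (hex ⟨z, h0, h⟩).elim⟩

lemma zpow_roots (g : ℤ) (hg : g ≠ 0) (γ : ℚ_[2]) : {x : ℚ_[2] | x ≠ 0 ∧ x ^ g = γ}.encard ≤ 2 := by
  obtain ⟨z1, z2, h⟩ := zpow_pair g hg γ
  exact (Set.encard_le_encard (t := {z1, z2}) fun x hx => h x hx.1 hx.2).trans ((Set.encard_insert_le _ _).trans (by rw [Set.encard_singleton]; norm_num))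

lemma core_zpow (a b c : ℚ_[2]) (ha : a ≠ 0) (p q : ℤ) (hp : p ≠ 0) (hq : q ≠ 0)
    (x y : ℚ_[2]) (hx : x ≠ 0) (hy : y ≠ 0)
    (hxy : x ≠ y) (hx1 : ‖x‖ ≤ 1) (hy1 : ‖y‖ ≤ 1) (e0 : a + b + c = 0)
    (ux : 1 + 4 * x ≠ 0) (uy : 1 + 4 * y ≠ 0)
    (ex : a + b * (1+4*x)^p + c*(1+4*x)^q = 0)
    (ey : a + b * (1+4*y)^p + c*(1+4*y)^q = 0) : False := by
  obtain ⟨l, hl⟩ : ∃ l : ℕ, (l : ℤ) = |p| + |q| := ⟨(|p|+|q|).toNat, by rw [Int.toNat_of_nonneg]; positivity⟩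
  obtain ⟨m, hm⟩ : ∃ m : ℕ, (m : ℤ) = p + l := ⟨(p+l).toNat, by
    rw [Int.toNat_of_nonneg]; rw [hl]; have := neg_abs_le p; have := abs_nonneg q; linarith⟩
  obtain ⟨n, hn⟩ : ∃ m : ℕ, (m : ℤ) = q + l := ⟨(q+l).toNat, by
    rw [Int.toNat_of_nonneg]; rw [hl]; have := neg_abs_le q; have := abs_nonneg p; linarith⟩
  have conv : ∀ t : ℚ_[2], t ≠ 0 → a + b * t^p + c * t^q = 0 → a * t^l + b * t^m + c * t^n = 0 := by
    intro t ht h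
    rw [← zpow_natCast t m, ← zpow_natCast t n, hm, hn, zpow_add₀ ht, zpow_add₀ ht, zpow_natCast]
    linear_combination t^l * h
  exact core a b c ha l m n (by omega) (by omega) x y hx hy hxy hx1 hy1 e0 (conv _ ux ex) (conv _ uy ey)

/-- roots of a trinomial in a coset -/
lemma coset (a b c : ℚ_[2]) (ha : a ≠ 0) (p q : ℤ) (hp : p ≠ 0) (hq : q ≠ 0) (s : ℚ_[2]) :
    {t : ℚ_[2] | t ≠ 0 ∧ a + b * t^p + c * t^q = 0 ∧ ∃ z : ℚ_[2], ‖z‖ ≤ 1 ∧ t = s * (1 + 4 * z)}.encard ≤ 2 := by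
  apply encard_le_two_of
  rintro x ⟨hx, ex, zx, hzx, rfl⟩ y ⟨hy, ey, zy, hzy, rfl⟩ z ⟨hz, ez, zz, hzz, rfl⟩ hxy hxz hyz
  obtain ⟨r, hr⟩ : ∃ r, r = s * (1 + 4 * zx) := ⟨_, rfl⟩
  obtain ⟨hs, hu⟩ := mul_ne_zero_iff.mp hx
  have hu1 : ‖1 + 4 * zx‖ = 1 := by
    refine le_antisymm (norm_one_add zx hzx) ?_
    by_contra hc
    push Not at hc
    have h4 : ‖4 * zx‖ ≤ 1/4 := by rw [norm_mul, norm4]; linarith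
    have h1 : ‖(1 + 4 * zx) - 4 * zx‖ = 1 := by simp
    have h2 := IsUltrametricDist.norm_add_le_max (1 + 4 * zx) (-(4 * zx))
    rw [← sub_eq_add_neg, h1, norm_neg] at h2
    rcases le_max_iff.mp h2 with h | h <;> linarith
  have form : ∀ w : ℚ_[2], ‖w‖ ≤ 1 → ∃ w', ‖w'‖ ≤ 1 ∧ s * (1 + 4 * w) = r * (1 + 4 * w') := by
    intro w hw
    refine ⟨(w - zx) / (1 + 4 * zx), ?_, ?_⟩
    · rw [norm_div, hu1, div_one]; exact subM hw hzx
    · rw [hr]; field_simp; ring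
  obtain ⟨y', hy', ey'⟩ := form zy hzy
  obtain ⟨z', hz', ez'⟩ := form zz hzz
  rw [← hr] at ex hxy hxz
  rw [ey'] at ey hy hxy hyz
  rw [ez'] at ez hz hxz hyz
  refine core_zpow a (b * r^p) (c * r^q) ha p q hp hq y' z' ?_ ?_ ?_ hy' hz' ex
    (mul_ne_zero_iff.mp hy).2 (mul_ne_zero_iff.mp hz).2 ?_ ?_
  · rintro rfl; simp at hxy
  · rintro rfl; simp at hxz
  · rintro rfl; exact hyz rfl
  · rw [mul_zpow, mul_zpow] at ey; linear_combination ey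
  · rw [mul_zpow, mul_zpow] at ez; linear_combination ez

lemma same_norm (a b c : ℚ_[2]) (ha : a ≠ 0) (p q : ℤ) (hp : p ≠ 0) (hq : q ≠ 0) (T : Set ℚ_[2])
    (hT : ∀ t ∈ T, t ≠ 0 ∧ a + b * t^p + c * t^q = 0) (hn : ∀ t ∈ T, ∀ s ∈ T, ‖t‖ = ‖s‖) :
    T.encard ≤ 4 := by
  rcases T.eq_empty_or_nonempty with rfl | ⟨s, hs⟩
  · simp
  · have hs0 := (hT s hs).1
    have := Set.encard_le_encard (s := T) (t := _ ∪ _) (fun t ht => by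
      obtain ⟨z, hz, h⟩ := unit_split (t / s) (by rw [norm_div, hn t ht s hs, div_self (norm_ne_zero_iff.mpr hs0)])
      have : t = s * (t / s) := by field_simp
      rcases h with h | h
      · exact Or.inl (show t ∈ {t : ℚ_[2] | t ≠ 0 ∧ a + b * t^p + c * t^q = 0 ∧ ∃ z : ℚ_[2], ‖z‖ ≤ 1 ∧ t = s * (1 + 4 * z)} from 
          ⟨(hT t ht).1, (hT t ht).2, z, hz, by rw [← h]; exact this⟩)
      · exact Or.inr (show t ∈ {t : ℚ_[2] | t ≠ 0 ∧ a + b * t^p + c * t^q = 0 ∧ ∃ z : ℚ_[2], ‖z‖ ≤ 1 ∧ t = (-s) * (1 + 4 * z)} from 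
          ⟨(hT t ht).1, (hT t ht).2, z, hz, by rw [this, h]; ring⟩))
    refine this.trans ((Set.encard_union_le _ _).trans ?_)
    refine (add_le_add (coset a b c ha p q hp hq s) (coset a b c ha p q hp hq (-s))).trans ?_
    norm_num

lemma ultra3 (x y z : ℚ_[2]) (h : x + y + z = 0) : ‖x‖ = ‖y‖ ∨ ‖x‖ = ‖z‖ ∨ ‖y‖ = ‖z‖ := by
  by_contra hc
  push Not at hc
  obtain ⟨h1, h2, h3⟩ := hc
  have e := IsUltrametricDist.norm_add_eq_max_of_norm_ne_norm h1
  have : ‖x + y‖ = ‖z‖ := by rw [← norm_neg z]; congr 1; linear_combination h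
  rw [e] at this
  rcases max_choice ‖x‖ ‖y‖ with h | h <;> rw [h] at this
  · exact h2 this
  · exact h3 this

lemma trinomial (a b c : ℚ_[2]) (ha : a ≠ 0) (hb : b ≠ 0) (hc : c ≠ 0) (p q : ℤ) (hp : p ≠ 0) (hq : q ≠ 0)
    (hpq : p ≠ q) : {t : ℚ_[2] | t ≠ 0 ∧ a + b * t^p + c * t^q = 0}.encard ≤ 12 := by
  set T := {t : ℚ_[2] | t ≠ 0 ∧ a + b * t^p + c * t^q = 0} with hTdef
  have hna := norm_pos_iff.mpr ha
  have hnb := norm_pos_iff.mpr hb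
  have hnc := norm_pos_iff.mpr hc
  have sub : T ⊆ ({t ∈ T | ‖t‖ ^ p = ‖a‖ / ‖b‖} ∪ {t ∈ T | ‖t‖ ^ q = ‖a‖ / ‖c‖}) ∪ {t ∈ T | ‖t‖ ^ (p-q) = ‖c‖ / ‖b‖} := by
    intro t ht
    have ht0 := norm_pos_iff.mpr ht.1
    have hq' := zpow_pos ht0 q
    rcases ultra3 _ _ _ ht.2 with h | h | h
    · left; left; refine ⟨ht, ?_⟩
      rw [norm_mul, norm_zpow] at h; rw [h]; field_simp
    · left; right; refine ⟨ht, ?_⟩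
      rw [norm_mul, norm_zpow] at h; rw [h]; field_simp
    · right; refine ⟨ht, ?_⟩
      rw [norm_mul, norm_zpow, norm_mul, norm_zpow] at h
      rw [zpow_sub₀ ht0.ne', div_eq_div_iff hq'.ne' hnb.ne']; linarith
  have piece : ∀ (j : ℤ) (κ : ℝ), j ≠ 0 → {t ∈ T | ‖t‖ ^ j = κ}.encard ≤ 4 := by
    intro j κ hj
    refine same_norm a b c ha p q hp hq _ (fun t ht => ht.1) ?_
    intro t ht s hs
    exact zpow_left_injOn₀ hj (norm_nonneg t) (norm_nonneg s) (ht.2.trans hs.2.symm)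
  refine (Set.encard_le_encard sub).trans ((Set.encard_union_le _ _).trans ?_)
  refine (add_le_add (Set.encard_union_le _ _) le_rfl).trans ?_
  refine (add_le_add (add_le_add (piece p _ hp) (piece q _ hq)) (piece (p-q) _ (sub_ne_zero.mpr hpq))).trans ?_
  norm_num

lemma trinomial' (a b c : ℚ_[2]) (ha : a ≠ 0) (hb : b ≠ 0) (hc : c ≠ 0) (p q : ℤ) (hq : q ≠ 0) :
    {t : ℚ_[2] | t ≠ 0 ∧ a + b * t^p + c * t^q = 0}.encard ≤ 12 := by
  by_cases hp : p = 0
  · subst hp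
    refine (Set.encard_le_encard ?_).trans ((zpow_roots q hq (-(a+b)/c)).trans (by norm_num))
    rintro t ⟨ht, h⟩
    refine ⟨ht, ?_⟩
    rw [eq_div_iff hc]; simp at h; linear_combination h
  by_cases hpq : p = q
  · subst hpq
    refine (Set.encard_le_encard ?_).trans ((zpow_roots p hq (-a/(b+c))).trans (by norm_num))
    rintro t ⟨ht, h⟩
    have h' : t^p * (b + c) = -a := by linear_combination h
    have : b + c ≠ 0 := by
      intro h0; rw [h0] at h'; apply ha; linear_combination h'
    exact ⟨ht, by rw [eq_div_iff this]; exact h'⟩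
  exact trinomial a b c ha hb hc p q hp hq hpq

lemma main_z (α β z : ℚ_[2]) (hα : α ≠ 0) (hβ : β ≠ 0) (A B n u v : ℤ) (hB : B ≠ 0) (hn : n ≠ 0)
    (huv : u * A + v * B = 1) :
    {x : ℚ_[2] | x ≠ 0 ∧ α + β * x^n ≠ 0 ∧ x^A * (α + β * x^n)^B = z}.encard ≤ 12 := by
  by_cases hz : z = 0
  · have : {x : ℚ_[2] | x ≠ 0 ∧ α + β * x^n ≠ 0 ∧ x^A * (α + β * x^n)^B = z} = ∅ := by
      ext x; simp only [Set.mem_setOf_eq, Set.mem_empty_iff_false, iff_false]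
      rintro ⟨hx, hy, h⟩
      exact mul_ne_zero (zpow_ne_zero _ hx) (zpow_ne_zero _ hy) (h.trans hz)
    rw [this]; simp
  refine (Set.encard_le_encard (t := (fun t => z^u * t^B) '' {t : ℚ_[2] | t ≠ 0 ∧ α + (-(z^v)) * t^(-A) + (β * z^(u*n)) * t^(B*n) = 0}) ?_).trans
    ((Set.encard_image_le _ _).trans (trinomial' _ _ _ hα (neg_ne_zero.mpr (zpow_ne_zero _ hz))
      (mul_ne_zero hβ (zpow_ne_zero _ hz)) _ _ (mul_ne_zero hB hn)))
  rintro x ⟨hx, hy, h⟩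
  obtain ⟨y, ey⟩ : ∃ y, y = α + β * x^n := ⟨_, rfl⟩
  rw [← ey] at h hy
  have hxe : z^u * (x^v * y^(-u))^B = x := by
    rw [← h]
    simp only [mul_zpow, ← zpow_mul]
    calc _ = (x^(A*u) * x^(v*B)) * (y^(B*u) * y^(-u*B)) := by ring
      _ = x := by
        rw [← zpow_add₀ hx, ← zpow_add₀ hy, show A*u+v*B = 1 by linarith, show B*u + -u*B = 0 by ring]; simp
  have hye : z^v * (x^v * y^(-u))^(-A) = y := by
    rw [← h]
    simp only [mul_zpow, ← zpow_mul]
    calc _ = (x^(A*v) * x^(v*(-A))) * (y^(B*v) * y^(-u*(-A))) := by ring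
      _ = y := by
        rw [← zpow_add₀ hx, ← zpow_add₀ hy, show A*v+v*(-A) = 0 by ring, show B*v + -u*(-A) = 1 by linarith]; simp
  refine ⟨x^v * y^(-u), ⟨mul_ne_zero (zpow_ne_zero _ hx) (zpow_ne_zero _ hy), ?_⟩, hxe⟩
  have hxn : z^(u*n) * (x^v * y^(-u))^(B*n) = x^n := by
    rw [zpow_mul, zpow_mul, ← mul_zpow, hxe]
  linear_combination -hye + β * hxn - ey

lemma main_nd (α β γ : ℚ_[2]) (hα : α ≠ 0) (hβ : β ≠ 0) (A B n : ℤ) (hB : B ≠ 0) (hn : n ≠ 0) :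
    {x : ℚ_[2] | x ≠ 0 ∧ α + β * x^n ≠ 0 ∧ x^A * (α + β * x^n)^B = γ}.encard ≤ 24 := by
  have hg : (Int.gcd A B : ℤ) ≠ 0 := by
    intro h; rw [Int.natCast_eq_zero, Int.gcd_eq_zero_iff] at h; exact hB h.2
  obtain ⟨g, hgd⟩ : ∃ g : ℤ, g = Int.gcd A B := ⟨_, rfl⟩
  obtain ⟨A', hA⟩ : g ∣ A := hgd ▸ Int.gcd_dvd_left ..
  obtain ⟨B', hB'⟩ : g ∣ B := hgd ▸ Int.gcd_dvd_right ..
  have bez := Int.gcd_eq_gcd_ab A B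
  rw [← hgd] at bez hg
  generalize Int.gcdA A B = u at bez
  generalize Int.gcdB A B = v at bez
  clear hgd
  subst hA hB'
  have huv : u * A' + v * B' = 1 := by
    apply mul_left_cancel₀ hg; linarith
  obtain ⟨z1, z2, hz⟩ := zpow_pair g hg γ
  have hB1 : B' ≠ 0 := by rintro rfl; simp at hB
  refine (Set.encard_le_encard (t := _ ∪ _) ?_).trans ((Set.encard_union_le _ _).trans
    ((add_le_add (main_z α β z1 hα hβ A' B' n u v hB1 hn huv) (main_z α β z2 hα hβ A' B' n u v hB1 hn huv)).trans (by norm_num)))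
  rintro x ⟨hx, hy, h⟩
  have : (x^A' * (α + β * x^n)^B')^g = γ := by
    rw [mul_zpow, ← zpow_mul, ← zpow_mul, mul_comm A', mul_comm B', h]
  rcases hz _ (mul_ne_zero (zpow_ne_zero _ hx) (zpow_ne_zero _ hy)) this with h' | h'
  · exact Or.inl ⟨hx, hy, h'⟩
  · exact Or.inr ⟨hx, hy, h'⟩

lemma mono_case (κ γ : ℚ_[2]) (A B j : ℤ) (y : ℚ_[2] → ℚ_[2]) (hy : ∀ x, x ≠ 0 → y x = κ * x^j) :
    {x : ℚ_[2] | x ≠ 0 ∧ y x ≠ 0 ∧ x^A * (y x)^B = γ}.encard ≤ 24 ∨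
    ∀ x, x ≠ 0 → y x ≠ 0 → x^A * (y x)^B = γ := by
  by_cases hκ : κ = 0
  · right; intro x hx h; rw [hy x hx, hκ] at h; simp at h
  have e : ∀ x, x ≠ 0 → x^A * (y x)^B = κ^B * x^(A + j * B) := by
    intro x hx
    rw [hy x hx, mul_zpow, ← zpow_mul, zpow_add₀ hx]; ring
  have hκB := zpow_ne_zero B hκ
  by_cases h0 : A + j * B = 0
  · by_cases hγ : κ^B = γ
    · right; intro x hx _; rw [e x hx, h0, hγ]; simp
    · left
      have : {x : ℚ_[2] | x ≠ 0 ∧ y x ≠ 0 ∧ x^A * (y x)^B = γ} = ∅ := by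
        ext x; simp only [Set.mem_setOf_eq, Set.mem_empty_iff_false, iff_false]
        rintro ⟨hx, _, h⟩
        rw [e x hx, h0] at h; simp at h; exact hγ h
      rw [this]; simp
  · left
    refine (Set.encard_le_encard ?_).trans ((zpow_roots _ h0 (γ / κ^B)).trans (by norm_num))
    rintro x ⟨hx, _, h⟩
    rw [e x hx] at h
    exact ⟨hx, by rw [eq_div_iff hκB]; linear_combination h⟩

lemma gen (α β γ : ℚ_[2]) (A B n : ℤ) :
    {x : ℚ_[2] | x ≠ 0 ∧ α + β * x^n ≠ 0 ∧ x^A * (α + β * x^n)^B = γ}.encard ≤ 24 ∨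
    ∀ x, x ≠ 0 → α + β * x^n ≠ 0 → x^A * (α + β * x^n)^B = γ := by
  by_cases hα : α = 0
  · exact mono_case β γ A B n (fun x => α + β * x^n) (fun x _ => by simp [hα])
  by_cases hβ : β = 0
  · exact mono_case α γ A B 0 (fun x => α + β * x^n) (fun x _ => by simp [hβ])
  by_cases hn : n = 0
  · exact mono_case (α + β) γ A B 0 (fun x => α + β * x^n) (fun x _ => by simp [hn])
  by_cases hB : B = 0
  · subst hB
    by_cases hA : A = 0
    · subst hA
      by_cases hγ : γ = 1
      · right; intro x _ _; simp [hγ]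
      · left
        have : {x : ℚ_[2] | x ≠ 0 ∧ α + β * x^n ≠ 0 ∧ x^(0:ℤ) * (α + β * x^n)^(0:ℤ) = γ} = ∅ := by
          ext x; simp only [Set.mem_setOf_eq, Set.mem_empty_iff_false, iff_false]
          rintro ⟨_, _, h⟩
          simp at h; exact hγ h.symm
        rw [this]; simp
    · left
      refine (Set.encard_le_encard ?_).trans ((zpow_roots _ hA γ).trans (by norm_num))
      rintro x ⟨hx, _, h⟩
      exact ⟨hx, by simpa using h⟩
  left; exact main_nd α β γ hα hβ A B n hB hn

lemma binom (c d : ℚ_[2]) (m m' : ℕ) : {x : ℚ_[2] | x ≠ 0 ∧ c * x^m + d * x^m' = 0}.encard ≤ 2 ∨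
    ∀ x, x ≠ 0 → c * x^m + d * x^m' = 0 := by
  by_cases hm : (m : ℤ) - m' = 0
  · have : m = m' := by omega
    subst this
    by_cases h : c + d = 0
    · right; intro x _; rw [← add_mul, h, zero_mul]
    · left
      have : {x : ℚ_[2] | x ≠ 0 ∧ c * x^m + d * x^m = 0} = ∅ := by
        ext x; simp only [Set.mem_setOf_eq, Set.mem_empty_iff_false, iff_false]
        rintro ⟨hx, e⟩
        rw [← add_mul] at e
        exact mul_ne_zero h (pow_ne_zero _ hx) e
      rw [this]; simp
  by_cases hc : c = 0
  · by_cases hd : d = 0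
    · right; intro x _; simp [hc, hd]
    · left
      have : {x : ℚ_[2] | x ≠ 0 ∧ c * x^m + d * x^m' = 0} = ∅ := by
        ext x; simp only [Set.mem_setOf_eq, Set.mem_empty_iff_false, iff_false]
        rintro ⟨hx, e⟩
        simp [hc, hd, hx] at e
      rw [this]; simp
  left
  refine (Set.encard_le_encard ?_).trans (zpow_roots _ hm (-d/c))
  rintro x ⟨hx, e⟩
  refine ⟨hx, ?_⟩
  rw [zpow_sub₀ hx, zpow_natCast, zpow_natCast, div_eq_div_iff (pow_ne_zero _ hx) hc]
  linear_combination e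

lemma second (c d c1 d1 : ℚ_[2]) (m m' a a' b b' : ℕ) (y : ℚ_[2] → ℚ_[2])
    (hy : ∀ x, y x = c1 * x^m + d1 * x^m') :
    {x : ℚ_[2] | x ≠ 0 ∧ y x ≠ 0 ∧ c * (x^a * y x^b) + d * (x^a' * y x^b') = 0}.encard ≤ 24 ∨
    ∀ x, x ≠ 0 → y x ≠ 0 → c * (x^a * y x^b) + d * (x^a' * y x^b') = 0 := by
  by_cases hc : c = 0
  · by_cases hd : d = 0
    · right; intro x _ _; simp [hc, hd]
    · left
      have : {x : ℚ_[2] | x ≠ 0 ∧ y x ≠ 0 ∧ c * (x^a * y x^b) + d * (x^a' * y x^b') = 0} = ∅ := by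
        ext x; simp only [Set.mem_setOf_eq, Set.mem_empty_iff_false, iff_false]
        rintro ⟨hx, hyx, e⟩
        simp [hc, hd, hx, hyx] at e
      rw [this]; simp
  obtain ⟨A, hA⟩ : ∃ A : ℤ, A = ((a:ℤ) - a') + m' * ((b:ℤ) - b') := ⟨_, rfl⟩
  have key : ∀ x, x ≠ 0 → ((y x ≠ 0 ↔ d1 + c1 * x^((m:ℤ) - m') ≠ 0) ∧ (y x ≠ 0 →
    (c * (x^a * y x^b) + d * (x^a' * y x^b') = 0 ↔ x^A * (d1 + c1 * x^((m:ℤ) - m'))^((b:ℤ) - b') = -d/c))) := by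
    intro x hx
    have e : y x = x^m' * (d1 + c1 * x^((m:ℤ) - m')) := by
      rw [hy, zpow_sub₀ hx, zpow_natCast, zpow_natCast]; field_simp; ring
    have h1 : y x ≠ 0 ↔ d1 + c1 * x^((m:ℤ) - m') ≠ 0 := by
      rw [e]; simp [hx]
    refine ⟨h1, fun hyx => ?_⟩
    have e2 : x^A * (d1 + c1 * x^((m:ℤ) - m'))^((b:ℤ) - b') = (x^a * y x^b) / (x^a' * y x^b') := by
      rw [hA, zpow_add₀ hx, zpow_mul, mul_assoc, ← mul_zpow, zpow_natCast, ← e, zpow_sub₀ hx, zpow_sub₀ hyx]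
      simp only [zpow_natCast]
      rw [div_mul_div_comm]
    rw [e2, div_eq_div_iff (mul_ne_zero (pow_ne_zero _ hx) (pow_ne_zero _ hyx)) hc]
    constructor <;> intro h <;> linear_combination h
  rcases gen d1 c1 (-d/c) A ((b:ℤ)-b') ((m:ℤ)-m') with h | h
  · left
    refine (Set.encard_le_encard ?_).trans h
    rintro x ⟨hx, hyx, h2⟩
    obtain ⟨k1, k2⟩ := key x hx
    exact ⟨hx, k1.mp hyx, (k2 hyx).mp h2⟩
  · right
    intro x hx hyx
    obtain ⟨k1, k2⟩ := key x hx
    exact (k2 hyx).mpr (h x hx (k1.mp hyx))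

lemma poly_zero (p : ℚ_[2][X]) (h : ∀ x, p.eval x = 0) : p = 0 :=
  Polynomial.funext (by simpa using h)

lemma P1_bound (c1 d1 : ℚ_[2]) (m m' : ℕ) (P : ℚ_[2][X]) (hP : P = C c1 * X^m + C d1 * X^m') (h0 : P ≠ 0) :
    {x : ℚ_[2] | x ≠ 0 ∧ P.eval x = 0}.encard ≤ 2 := by
  rcases binom c1 d1 m m' with h | h
  · subst hP; simpa using h
  · exfalso
    have : X * P = 0 := poly_zero _ fun x => by
      by_cases hx : x = 0
      · simp [hx]
      · subst hP; simpa [hx] using h x hx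
    exact (mul_ne_zero X_ne_zero h0) this

lemma P2_bound (c d c1 d1 : ℚ_[2]) (m m' a a' b b' : ℕ) (P Q : ℚ_[2][X]) (hP : P = C c1 * X^m + C d1 * X^m')
    (hQ : Q = C c * (X^a * P^b) + C d * (X^a' * P^b')) (h0 : P ≠ 0) (h1 : Q ≠ 0) :
    {x : ℚ_[2] | x ≠ 0 ∧ P.eval x ≠ 0 ∧ Q.eval x = 0}.encard ≤ 24 := by
  have hQe : ∀ x, Q.eval x = c * (x^a * P.eval x^b) + d * (x^a' * P.eval x^b') := by
    intro x; rw [hQ]; simp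
  rcases second c d c1 d1 m m' a a' b b' (fun x => P.eval x) (by intro x; rw [hP]; simp) with h | h
  · simpa only [hQe] using h
  · exfalso
    have : X * P * Q = 0 := poly_zero _ fun x => by
      by_cases hx : x = 0
      · simp [hx]
      by_cases hy : P.eval x = 0
      · simp [hy]
      have := h x hx hy
      simp only [eval_mul, hQe, this, mul_zero]
    exact (mul_ne_zero (mul_ne_zero X_ne_zero h0) h1) this

lemma final_core (k c d c1 d1 : ℚ_[2]) (m m' a a' b b' e0 e1 e2 : ℕ) (f P Q : ℚ_[2][X])
    (hP : P = C c1 * X^m + C d1 * X^m')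
    (hQ : Q = C c * (X^a * P^b) + C d * (X^a' * P^b'))
    (hf : f = C k * (X^e0 * P^e1 * Q^e2)) (hf0 : f ≠ 0) :
    {x : ℚ_[2] | f.eval x = 0}.encard ≤ 27 := by
  have hne : k ≠ 0 ∧ (P = 0 → e1 = 0) ∧ (Q = 0 → e2 = 0) := by
    refine ⟨?_, ?_, ?_⟩
    · rintro rfl; simp at hf; exact hf0 hf
    · intro h; by_contra he; rw [h, zero_pow he] at hf; simp at hf; exact hf0 hf
    · intro h; by_contra he; rw [h, zero_pow he] at hf; simp at hf; exact hf0 hf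
  obtain ⟨hk, hP0, hQ0⟩ := hne
  have roots : ∀ x, f.eval x = 0 → x = 0 ∨ (P.eval x = 0 ∧ P ≠ 0) ∨ (Q.eval x = 0 ∧ Q ≠ 0) := by
    intro x hx
    rw [hf] at hx
    simp only [eval_mul, eval_C, eval_pow, eval_X, mul_eq_zero, hk, false_or, pow_eq_zero_iff'] at hx
    rcases hx with (h | h) | h
    · exact Or.inl h.1
    · exact Or.inr (Or.inl ⟨h.1, fun h' => h.2 (hP0 h')⟩)
    · exact Or.inr (Or.inr ⟨h.1, fun h' => h.2 (hQ0 h')⟩)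
  have T1 : {x : ℚ_[2] | x ≠ 0 ∧ P.eval x = 0 ∧ P ≠ 0}.encard ≤ 2 := by
    by_cases h : P = 0
    · simp [h]
    · simpa [h] using P1_bound c1 d1 m m' P hP h
  have T2 : {x : ℚ_[2] | x ≠ 0 ∧ (P = 0 ∨ P.eval x ≠ 0) ∧ Q.eval x = 0 ∧ Q ≠ 0}.encard ≤ 24 := by
    by_cases h : Q = 0
    · simp [h]
    by_cases h' : P = 0
    · have := P1_bound (c * 0^b) (d * 0^b') a a' Q (by rw [hQ, h']; simp only [C_mul, C_pow, C_0]; ring) h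
      refine le_trans ?_ (this.trans (by norm_num))
      simp [h', h]
    · simpa [h, h'] using P2_bound c d c1 d1 m m' a a' b b' P Q hP hQ h' h
  have sub : {x : ℚ_[2] | f.eval x = 0} ⊆ ({0} ∪ {x : ℚ_[2] | x ≠ 0 ∧ P.eval x = 0 ∧ P ≠ 0}) ∪
      {x : ℚ_[2] | x ≠ 0 ∧ (P = 0 ∨ P.eval x ≠ 0) ∧ Q.eval x = 0 ∧ Q ≠ 0} := by
    intro x hx
    have := roots x hx
    simp only [Set.mem_union, Set.mem_singleton_iff, Set.mem_setOf_eq]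
    tauto
  refine (Set.encard_le_encard sub).trans ((Set.encard_union_le _ _).trans ?_)
  refine (add_le_add (Set.encard_union_le _ _) le_rfl).trans ?_
  refine (add_le_add (add_le_add (Set.encard_singleton _).le T1) T2).trans ?_
  norm_num

/-- Horner: every polynomial has some presentation. -/
lemma horner (f : ℚ_[2][X]) : ∃ s, HasAddComplexityPres f s := by
  -- X_{j} = sum of top coefficients, built by Horner's rule
  obtain ⟨N, hN⟩ : ∃ N, N = f.natDegree := ⟨_, rfl⟩
  let H : ℕ → ℚ_[2][X] := fun j => if j = 0 then X else ∑ i ∈ Finset.range j, C (f.coeff (N + 1 - j + i)) * X^i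
  have Hs : ∀ j, 1 ≤ j → j ≤ N → H (j+1) = X * H j + C (f.coeff (N - j)) := by
    intro j hj hjN
    simp only [H, Nat.succ_ne_zero, if_false, show j ≠ 0 by omega]
    rw [Finset.sum_range_succ', Finset.mul_sum]
    congr 1
    · refine Finset.sum_congr rfl fun i _ => ?_
      rw [show N + 1 - (j + 1) + (i + 1) = N + 1 - j + i by omega]; ring
    · simp
  have H1 : H 1 = C (f.coeff N) := by simp [H]
  have HN : H (N+1) = f := by
    simp only [H, Nat.succ_ne_zero, if_false]
    conv_rhs => rw [f.as_sum_range_C_mul_X_pow, ← hN]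
    simp
  refine ⟨N+1, fun j => if j = 1 then 0 else 1, fun j => f.coeff (N + 1 - j),
    fun i j => if j = N + 2 then (if i = N+1 then 1 else 0) else if i = 0 ∨ i + 1 = j then 1 else 0, fun _ _ => 0, H, by simp [H], ?_, ?_⟩
  · intro j hj hjN
    simp only [pow_zero, Finset.prod_const_one, mul_one]
    rcases Nat.lt_or_ge 1 j with h | h
    · obtain ⟨i, rfl⟩ : ∃ i, j = i + 2 := ⟨j - 2, by omega⟩
      rw [show i + 2 = (i+1)+1 by rfl, Hs (i+1) (by omega) (by omega)]
      have : (i + 1 + 1 = N + 2) = False := by simp; omega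
      simp only [this, if_false]
      rw [Finset.prod_range_succ, Finset.prod_range_succ']
      have : ∏ k ∈ Finset.range i, H (k+1) ^ (if k + 1 = 0 ∨ k + 1 + 1 = i + 1 + 1 then 1 else 0) = 1 := by
        refine Finset.prod_eq_one fun k hk => ?_
        have := Finset.mem_range.mp hk
        rw [if_neg (by omega), pow_zero]
      rw [this]
      simp [H]
    · have : j = 1 := by omega
      subst this
      rw [H1]; simp
  · simp only [if_true, show (N + 1 + 1 = 1) = False by simp, if_false]
    rw [Finset.prod_range_succ]
    have : ∏ x ∈ Finset.range (N+1), H x ^ (if x = N + 1 then 1 else 0) = 1 := by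
      refine Finset.prod_eq_one fun k hk => ?_
      have := Finset.mem_range.mp hk
      rw [if_neg (by omega), pow_zero]
    rw [this, HN]; simp

theorem twoadic_root_count_sigma_le_two
    (f : Polynomial ℚ_[2]) (hf : f ≠ 0) (hσ : addComplexity f ≤ 2) :
    {x : ℚ_[2] | f.eval x = 0}.ncard ≤ 35 := by
  have hpres : HasAddComplexityPres f (addComplexity f) := Nat.sInf_mem (horner f)
  generalize addComplexity f = s at hσ hpres
  have key : {x : ℚ_[2] | f.eval x = 0}.encard ≤ 27 := by
    obtain ⟨c, d, m, m', Xs, h0, hj, hfe⟩ := hpres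
    interval_cases s
    · refine final_core (c 1) 0 0 0 0 0 0 0 0 0 0 (m 0 1) 0 0 f 0 0 (by simp) (by simp) ?_ hf
      rw [hfe]; simp [h0]
    · have e1 := hj 1 le_rfl le_rfl
      simp only [Finset.prod_range_succ, Finset.prod_range_zero, one_mul, h0] at e1
      refine final_core (c 2) 0 0 (c 1) (d 1) (m 0 1) (m' 0 1) 0 0 0 0 (m 0 2) (m 1 2) 0 f (Xs 1) 0 e1 (by simp) ?_ hf
      rw [hfe]; simp [h0, Finset.prod_range_succ]
    · have e1 := hj 1 le_rfl (by norm_num)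
      have e2 := hj 2 (by norm_num) le_rfl
      simp only [Finset.prod_range_succ, Finset.prod_range_zero, one_mul, h0] at e1 e2
      refine final_core (c 3) (c 2) (d 2) (c 1) (d 1) (m 0 1) (m' 0 1) (m 0 2) (m' 0 2) (m 1 2) (m' 1 2)
        (m 0 3) (m 1 3) (m 2 3) f (Xs 1) (Xs 2) e1 e2 ?_ hf
      rw [hfe]; simp [h0, Finset.prod_range_succ]
  have h35 : {x : ℚ_[2] | f.eval x = 0}.encard ≤ ((27 : ℕ) : ℕ∞) := by exact_mod_cast key
  have := ENat.toNat_le_of_le_coe h35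
  rw [Set.ncard_def]
  omega
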